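/- Let a, b satisfy either a, b \in (-1,\infty) with ab > 0, or a, b \in \mathbb{C} \setminus \{0\} with b = \overline{a}; let c be a positive real number with c > \mathrm{Re}(a+b) + 1, and let \alpha \in \mathbb{C} with |\alpha| < 1. If |\alpha| \cdot \frac{\Gamma(c)\Gamma(c-a-b)}{\Gamma(c-a)\Gamma(c-b)} \cdot \frac{2ab + c - a - b - 1}{c - a - b - 1} \leq 2 (this quantity being a positive real number), then the Taylor coefficients b_{n+1} = \frac{\alpha}{2} \frac{(a)_n (b)_n}{(c)_n n! (n+1)} of g_3(z) = (\alpha/2) \int_0^z F(a,b;c;t)\,dt satisfy \sum_{n=1}^{\infty} n(2n-1)|b_n| \leq 1; consequently f_3(z) = z + \overline{(\alpha/2) \int_0^z F(a,b;c;t)\,dt} is uniformly convex in \mathbb{D}. -/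

import Mathlib

open Complex Metric ComplexConjugate

noncomputable section

/-- The Pochhammer symbol `(x)ₙ = x(x+1)⋯(x+n-1)` for `x : ℂ`. -/
def poch (x : ℂ) (n : ℕ) : ℂ := (ascPochhammer ℂ n).eval x

/-- The primitive `∫₀ᶻ F(a,b;c;t) dt = ∑ (a)ₙ(b)ₙ/((c)ₙ n! (n+1)) z^{n+1}` of the
Gaussian hypergeometric function. -/
def hypFPrim (a b c z : ℂ) : ℂ :=
  ∑' n : ℕ, poch a n * poch b n
    / (poch c n * (Nat.factorial n : ℂ) * (n + 1 : ℂ)) * z ^ (n + 1)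

/-- The necessary and sufficient condition (due to Kanas–Ponnusamy–Sairam) for a
sense-preserving harmonic mapping `f = h + conj g` to be uniformly convex in the unit
disk, taken here as the formal definition of "uniformly convex in `𝔻`". -/
def UniformlyConvexOnDisk (h g : ℂ → ℂ) : Prop :=
  ∀ z ∈ ball (0:ℂ) 1, ∀ ζ ∈ ball (0:ℂ) 1, z ≠ ζ →
    0 ≤ (((z - ζ) * deriv h z + (z - ζ) ^ 2 * deriv (deriv h) z
          + conj ((z - ζ) * deriv g z) + conj ((z - ζ) ^ 2 * deriv (deriv g) z))
        / ((z - ζ) * deriv h z - conj ((z - ζ) * deriv g z))).re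

/-- The Taylor coefficient `b_{n+1} = (α/2) (a)ₙ(b)ₙ/((c)ₙ n! (n+1))` of
`g₃(z) = (α/2) ∫₀ᶻ F(a,b;c;t) dt`. -/
def bc3 (a b c α : ℂ) (n : ℕ) : ℂ :=
  α / 2 * (poch a n * poch b n) / (poch c n * (Nat.factorial n : ℂ) * (n + 1 : ℂ))

/-- Real form of the hypergeometric coefficients, with `s = a + b`, `p = a b`. -/
def hA (s p c : ℝ) (n : ℕ) : ℝ :=
  ∏ j ∈ Finset.range n, (((j:ℝ) ^ 2 + s * j + p) / ((c + j) * (j + 1)))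

lemma hA_zero (s p c : ℝ) : hA s p c 0 = 1 := by simp [hA]

lemma hA_succ (s p c : ℝ) (n : ℕ) :
    hA s p c (n + 1) = hA s p c n * (((n:ℝ) ^ 2 + s * n + p) / ((c + n) * (n + 1))) := by
  rw [hA, Finset.prod_range_succ, ← hA]

lemma hA_nonneg (s p c : ℝ) (hc : 0 < c) (hpos : ∀ n : ℕ, 0 ≤ (n:ℝ) ^ 2 + s * n + p) (n : ℕ) :
    0 ≤ hA s p c n := by
  apply Finset.prod_nonneg
  intro j _
  have := hpos j
  positivity

lemma hA_shift (s p c : ℝ) (hc : 0 < c) (n : ℕ) :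
    hA s p (c + 1) n = hA s p c n * (c / (c + n)) := by
  induction n with
  | zero => simp [hA_zero, hc.ne']
  | succ n ih =>
    rw [hA_succ, hA_succ, ih]
    have h1 : c + (n:ℝ) ≠ 0 := by positivity
    have h2 : c + 1 + (n:ℝ) ≠ 0 := by positivity
    have h3 : c + ((n:ℝ) + 1) ≠ 0 := by positivity
    push_cast
    rw [show c + 1 + (n:ℝ) = c + (n + 1) by ring]
    field_simp

lemma hA_tele (s p c : ℝ) (hc : 0 < c) (N : ℕ) :
    ∑ n ∈ Finset.range N, ((c - s - 1) * n - p) * hA s p c n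
      = - ((N:ℝ) * (c + N - 1) * hA s p c N) := by
  induction N with
  | zero => simp
  | succ n ih =>
    rw [Finset.sum_range_succ, ih, hA_succ]
    have h1 : c + (n:ℝ) ≠ 0 := by positivity
    push_cast
    rw [show c + ((n:ℝ) + 1) - 1 = c + n by ring]
    field_simp
    ring

lemma hA_summable_mul (s p c : ℝ) (hc : 0 < c) (hs : s + 1 < c) (hp : 0 < p)
    (hpos : ∀ n : ℕ, 0 ≤ (n:ℝ) ^ 2 + s * n + p) :
    Summable fun n : ℕ => (n:ℝ) * hA s p c n := by
  set δ := c - s - 1 with hδ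
  have hδ0 : 0 < δ := by linarith
  obtain ⟨M, hM⟩ := exists_nat_ge (2 * p / δ)
  rw [div_le_iff₀ hδ0] at hM
  let e : ℕ → ℝ := fun n => if n < M then p * hA s p c n else 0
  have hA0 := hA_nonneg s p c hc hpos
  have he0 : ∀ n, 0 ≤ e n := by
    intro n
    simp only [e]
    split_ifs
    · exact mul_nonneg hp.le (hA0 n)
    · exact le_rfl
  have he : Summable e := by
    apply summable_of_ne_finset_zero (s := Finset.range M)
    intro n hn
    simp only [Finset.mem_range] at hn
    simp [e, hn]
  have key : Summable fun n : ℕ => δ / 2 * ((n:ℝ) * hA s p c n) := by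
    apply summable_of_sum_range_le (c := ∑' n, e n)
    · intro n
      have := hA0 n
      positivity
    · intro N
      calc ∑ n ∈ Finset.range N, δ / 2 * ((n:ℝ) * hA s p c n)
          ≤ ∑ n ∈ Finset.range N, ((δ * n - p) * hA s p c n + e n) := by
            apply Finset.sum_le_sum
            intro n _
            have h := hA0 n
            simp only [e]
            split_ifs with hn
            · have : 0 ≤ δ / 2 * (n:ℝ) * hA s p c n := by positivity
              nlinarith
            · have hn' : (M:ℝ) ≤ n := by exact_mod_cast not_lt.mp hn
              have : 0 ≤ (δ / 2 * (n:ℝ) - p) := by nlinarith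
              nlinarith [mul_nonneg this h]
        _ = - ((N:ℝ) * (c + N - 1) * hA s p c N) + ∑ n ∈ Finset.range N, e n := by
            rw [Finset.sum_add_distrib, hA_tele s p c hc]
        _ ≤ ∑' n, e n := by
            have h1 := he.sum_le_tsum (Finset.range N) (fun i _ => he0 i)
            have h2 : 0 ≤ (N:ℝ) * (c + N - 1) * hA s p c N := by
              rcases Nat.eq_zero_or_pos N with h | h
              · simp [h]
              · have : (1:ℝ) ≤ N := by exact_mod_cast h
                have h3 : 0 ≤ c + N - 1 := by linarith
                have := hA0 N
                positivity
            linarith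
  have := key.mul_left (2 / δ)
  refine this.congr fun n => ?_
  field_simp

lemma hA_summable (s p c : ℝ) (hc : 0 < c) (hs : s + 1 < c) (hp : 0 < p)
    (hpos : ∀ n : ℕ, 0 ≤ (n:ℝ) ^ 2 + s * n + p) :
    Summable fun n : ℕ => hA s p c n := by
  have h := hA_summable_mul s p c hc hs hp hpos
  have hA0 := hA_nonneg s p c hc hpos
  rw [← summable_nat_add_iff 1] at h ⊢
  refine Summable.of_nonneg_of_le (fun n => hA0 _) (fun n => ?_) h
  push_cast
  nlinarith [hA0 (n + 1), mul_nonneg (Nat.cast_nonneg (α := ℝ) n) (hA0 (n + 1))]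

lemma hA_tsum_mul (s p c : ℝ) (hc : 0 < c) (hs : s + 1 < c) (hp : 0 < p)
    (hpos : ∀ n : ℕ, 0 ≤ (n:ℝ) ^ 2 + s * n + p) :
    (c - s - 1) * ∑' n : ℕ, (n:ℝ) * hA s p c n = p * ∑' n, hA s p c n := by
  have h := hA_summable_mul s p c hc hs hp hpos
  have h' := hA_summable s p c hc hs hp hpos
  have hA0 := hA_nonneg s p c hc hpos
  have hd := (h.hasSum.mul_left (c - s - 1)).sub (h'.hasSum.mul_left p)
  set L := (c - s - 1) * ∑' n : ℕ, (n:ℝ) * hA s p c n - p * ∑' n, hA s p c n with hL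
  have ht := hd.tendsto_sum_nat.neg
  have ht' : Filter.Tendsto (fun N : ℕ => (N:ℝ) * (c + N - 1) * hA s p c N) Filter.atTop
      (nhds (-L)) := by
    refine ht.congr fun N => ?_
    rw [← neg_eq_iff_eq_neg.mpr (hA_tele s p c hc N), neg_inj]
    exact Finset.sum_congr rfl fun n _ => by ring
  have hL0 : 0 ≤ -L := by
    apply ge_of_tendsto ht'
    filter_upwards [Filter.eventually_ge_atTop 1] with N hN
    have : (1:ℝ) ≤ N := by exact_mod_cast hN
    have h3 : 0 ≤ c + N - 1 := by linarith
    have := hA0 N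
    positivity
  rcases hL0.eq_or_lt with h0 | h0
  · linarith
  exfalso
  have hev := ht'.eventually (lt_mem_nhds (half_lt_self h0))
  rw [Filter.eventually_atTop] at hev
  obtain ⟨M, hM⟩ := hev
  apply Real.not_summable_natCast_inv
  rw [← summable_nat_add_iff (M + 1)]
  have h2 := ((summable_nat_add_iff (M + 1)).mpr h).mul_left (2 * (c + 1) / (-L))
  refine Summable.of_nonneg_of_le (fun n => by positivity) (fun n => ?_) h2
  have h3 := hM (n + (M + 1)) (by omega)
  have h4 := hA0 (n + (M + 1))
  have h5 : (1:ℝ) ≤ ((n + (M + 1) : ℕ) : ℝ) := by exact_mod_cast (by omega)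
  generalize ((n + (M + 1) : ℕ) : ℝ) = x at *
  generalize hA s p c (n + (M + 1)) = y at *
  have hx : 0 < x := by linarith
  rw [inv_eq_one_div, div_le_iff₀ hx, div_mul_eq_mul_div, div_mul_eq_mul_div, le_div_iff₀ h0]
  have h6 : x * (c + x - 1) * y ≤ x * ((c + 1) * x) * y := by
    gcongr
    nlinarith
  nlinarith

lemma hA_contig (s p c : ℝ) (hc : 0 < c) (hs : s + 1 < c) (hp : 0 < p)
    (hpos : ∀ n : ℕ, 0 ≤ (n:ℝ) ^ 2 + s * n + p) :
    c * (c - s) * ∑' n, hA s p c n = (c ^ 2 - s * c + p) * ∑' n, hA s p (c + 1) n := by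
  have h := hA_summable_mul s p c hc hs hp hpos
  have h1 := hA_summable s p c hc hs hp hpos
  have h2 := hA_summable s p (c + 1) (by linarith) (by linarith) hp hpos
  have hd := ((h1.hasSum.mul_left (c * (c - s))).sub
    (h2.hasSum.mul_left (c ^ 2 - s * c + p))).tendsto_sum_nat
  have hU : Filter.Tendsto (fun N : ℕ => - (c * ((N:ℝ) * hA s p c N))) Filter.atTop (nhds 0) := by
    simpa using (h.tendsto_atTop_zero.const_mul c).neg
  have := tendsto_nhds_unique (hd.congr fun N => ?_) hU
  · linarith
  · induction N with
    | zero => simp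
    | succ n ih =>
      rw [Finset.sum_range_succ, ih, hA_succ, hA_shift s p c hc]
      have h1 : c + (n:ℝ) ≠ 0 := by positivity
      push_cast
      field_simp
      ring

lemma hA_tsum_ge (s p c : ℝ) (hc : 0 < c) (hs : s + 1 < c) (hp : 0 < p)
    (hpos : ∀ n : ℕ, 0 ≤ (n:ℝ) ^ 2 + s * n + p) : 1 ≤ ∑' n, hA s p c n := by
  have := (hA_summable s p c hc hs hp hpos).le_tsum 0
    (fun i _ => hA_nonneg s p c hc hpos i)
  rwa [hA_zero] at this

lemma hA_step (s p c : ℝ) (hc : 0 < c) (hs : s + 1 < c) (hp : 0 < p)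
    (hpos : ∀ n : ℕ, 0 ≤ (n:ℝ) ^ 2 + s * n + p) :
    (c + 1) * (∑' n, hA s p (c + 1) n - 1) ≤ c * (∑' n, hA s p c n - 1) := by
  have h1 := hA_summable s p c hc hs hp hpos
  have h2 := hA_summable s p (c + 1) (by linarith) (by linarith) hp hpos
  rw [h1.tsum_eq_zero_add, h2.tsum_eq_zero_add, hA_zero, hA_zero, add_sub_cancel_left,
    add_sub_cancel_left, ← tsum_mul_left, ← tsum_mul_left]
  refine Summable.tsum_le_tsum (fun n => ?_) (((summable_nat_add_iff 1).mpr h2).mul_left _)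
    (((summable_nat_add_iff 1).mpr h1).mul_left _)
  rw [hA_shift s p c hc]
  have h := hA_nonneg s p c hc hpos (n + 1)
  have h3 : (c + 1) * (c / (c + ((n + 1 : ℕ) : ℝ))) ≤ c := by
    rw [← mul_div_assoc, div_le_iff₀ (by positivity)]
    push_cast
    nlinarith [mul_nonneg hc.le (Nat.cast_nonneg (α := ℝ) n)]
  nlinarith

lemma hA_step_iter (s p c : ℝ) (hc : 0 < c) (hs : s + 1 < c) (hp : 0 < p)
    (hpos : ∀ n : ℕ, 0 ≤ (n:ℝ) ^ 2 + s * n + p) (N : ℕ) :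
    (c + N) * (∑' n, hA s p (c + N) n - 1) ≤ c * (∑' n, hA s p c n - 1) := by
  induction N with
  | zero => simp
  | succ N ih =>
    have hN : (0:ℝ) ≤ N := Nat.cast_nonneg N
    have := hA_step s p (c + N) (by linarith) (by linarith) hp hpos
    push_cast
    rw [← add_assoc]
    linarith

lemma hA_tendsto (s p c : ℝ) (hc : 0 < c) (hs : s + 1 < c) (hp : 0 < p)
    (hpos : ∀ n : ℕ, 0 ≤ (n:ℝ) ^ 2 + s * n + p) :
    Filter.Tendsto (fun N : ℕ => ∑' n, hA s p (c + N) n) Filter.atTop (nhds 1) := by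
  have hlim : Filter.Tendsto (fun N : ℕ => 1 + c * (∑' n, hA s p c n - 1) / (c + N))
      Filter.atTop (nhds (1 + 0)) := by
    apply Filter.Tendsto.const_add
    apply Filter.Tendsto.const_div_atTop
    exact Filter.tendsto_atTop_add_const_left _ _ tendsto_natCast_atTop_atTop
  rw [add_zero] at hlim
  refine tendsto_of_tendsto_of_tendsto_of_le_of_le tendsto_const_nhds hlim ?_ ?_
  · intro N
    have hN : (0:ℝ) ≤ N := Nat.cast_nonneg N
    exact hA_tsum_ge s p (c + N) (by linarith) (by linarith) hp hpos
  · intro N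
    have hN : (0:ℝ) ≤ N := Nat.cast_nonneg N
    have := hA_step_iter s p c hc hs hp hpos N
    have h2 : ∑' n, hA s p (c + N) n - 1 ≤ c * (∑' n, hA s p c n - 1) / (c + N) := by
      rw [le_div_iff₀ (by linarith)]
      linarith
    simp only
    linarith

lemma hA_contig_iter (s p c : ℝ) (hc : 0 < c) (hs : s + 1 < c) (hp : 0 < p)
    (hpos : ∀ n : ℕ, 0 ≤ (n:ℝ) ^ 2 + s * n + p) (N : ℕ) :
    ∑' n, hA s p c n = (∏ j ∈ Finset.range N,
      (((c + j) ^ 2 - s * (c + j) + p) / ((c + j) * (c + j - s)))) * ∑' n, hA s p (c + N) n := by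
  induction N with
  | zero => simp
  | succ N ih =>
    have hN : (0:ℝ) ≤ N := Nat.cast_nonneg N
    have h := hA_contig s p (c + N) (by linarith) (by linarith) hp hpos
    rw [ih, Finset.prod_range_succ]
    push_cast
    rw [← add_assoc, mul_assoc]
    congr 1
    rw [div_mul_eq_mul_div, ← h, mul_div_cancel_left₀]
    have h1 : c + (N:ℝ) ≠ 0 := by positivity
    have h2 : c + (N:ℝ) - s ≠ 0 := by linarith
    exact mul_ne_zero h1 h2

lemma gauss_sum (a b : ℂ) (s p c : ℝ) (hab : a + b = s) (habp : a * b = p)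
    (hc : 0 < c) (hs : s + 1 < c) (hp : 0 < p)
    (hpos : ∀ n : ℕ, 0 ≤ (n:ℝ) ^ 2 + s * n + p)
    (ha : Complex.Gamma ((c : ℂ) - a) ≠ 0) (hb : Complex.Gamma ((c : ℂ) - b) ≠ 0) :
    ((∑' n, hA s p c n : ℝ) : ℂ) = Complex.Gamma (c : ℂ) * Complex.Gamma ((c : ℂ) - a - b)
          / (Complex.Gamma ((c : ℂ) - a) * Complex.Gamma ((c : ℂ) - b)) := by
  have ht := ((GammaSeq_tendsto_Gamma (c:ℂ)).mul (GammaSeq_tendsto_Gamma ((c:ℂ) - a - b))).div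
    ((GammaSeq_tendsto_Gamma ((c:ℂ) - a)).mul (GammaSeq_tendsto_Gamma ((c:ℂ) - b)))
    (mul_ne_zero ha hb)
  have h1 := (Filter.tendsto_add_atTop_iff_nat 1).mpr (hA_tendsto s p c hc hs hp hpos)
  have h1' : Filter.Tendsto (fun N : ℕ => ((∑' n, hA s p (c + (N + 1 : ℕ)) n : ℝ) : ℂ))
      Filter.atTop (nhds ((1:ℝ):ℂ)) :=
    (Complex.continuous_ofReal.tendsto 1).comp h1
  have h2 := ht.mul h1'
  rw [Complex.ofReal_one, mul_one] at h2
  refine tendsto_nhds_unique (tendsto_const_nhds.congr' ?_) h2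
  filter_upwards [Filter.eventually_ge_atTop 1] with N hN
  rw [hA_contig_iter s p c hc hs hp hpos (N + 1), Complex.ofReal_mul]
  congr 1
  have hN0 : (N:ℂ) ≠ 0 := by exact_mod_cast (by omega : N ≠ 0)
  have hpow : (N:ℂ) ^ (c:ℂ) * (N:ℂ) ^ ((c:ℂ) - a - b)
      = (N:ℂ) ^ ((c:ℂ) - a) * (N:ℂ) ^ ((c:ℂ) - b) := by
    rw [← Complex.cpow_add _ _ hN0, ← Complex.cpow_add _ _ hN0]
    congr 1
    ring
  have na : ∀ j : ℕ, (c:ℂ) - a + j ≠ 0 := fun j h =>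
    ha ((Complex.Gamma_eq_zero_iff _).mpr ⟨j, eq_neg_of_add_eq_zero_left h⟩)
  have nb : ∀ j : ℕ, (c:ℂ) - b + j ≠ 0 := fun j h =>
    hb ((Complex.Gamma_eq_zero_iff _).mpr ⟨j, eq_neg_of_add_eq_zero_left h⟩)
  have nc : ∀ j : ℕ, (c:ℂ) + j ≠ 0 := fun j h => by
    have : c + (j:ℝ) = 0 := by exact_mod_cast h
    have hj : (0:ℝ) ≤ j := Nat.cast_nonneg j
    linarith
  have nd : ∀ j : ℕ, (c:ℂ) - a - b + j ≠ 0 := fun j h => by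
    rw [sub_sub, hab] at h
    have : c - s + (j:ℝ) = 0 := by exact_mod_cast h
    have hj : (0:ℝ) ≤ j := Nat.cast_nonneg j
    linarith
  have e1 : ((∏ j ∈ Finset.range (N + 1),
      (((c + j) ^ 2 - s * (c + j) + p) / ((c + j) * (c + j - s))) : ℝ) : ℂ)
      = ((∏ j ∈ Finset.range (N + 1), ((c:ℂ) - a + j)) *
          (∏ j ∈ Finset.range (N + 1), ((c:ℂ) - b + j))) /
        ((∏ j ∈ Finset.range (N + 1), ((c:ℂ) + j)) *
          (∏ j ∈ Finset.range (N + 1), ((c:ℂ) - a - b + j))) := by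
    rw [← Finset.prod_mul_distrib, ← Finset.prod_mul_distrib, ← Finset.prod_div_distrib]
    push_cast
    refine Finset.prod_congr rfl fun j _ => ?_
    rw [← hab, ← habp]
    congr 1 <;> ring
  rw [e1]
  have pa := Finset.prod_ne_zero_iff.mpr (fun j (_ : j ∈ Finset.range (N + 1)) => na j)
  have pb := Finset.prod_ne_zero_iff.mpr (fun j (_ : j ∈ Finset.range (N + 1)) => nb j)
  have pc := Finset.prod_ne_zero_iff.mpr (fun j (_ : j ∈ Finset.range (N + 1)) => nc j)
  have pd := Finset.prod_ne_zero_iff.mpr (fun j (_ : j ∈ Finset.range (N + 1)) => nd j)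
  have hf : (N.factorial : ℂ) ≠ 0 := by exact_mod_cast N.factorial_ne_zero
  have q1 : (N:ℂ) ^ ((c:ℂ) - a) ≠ 0 := by simp [Complex.cpow_eq_zero_iff, hN0]
  have q2 : (N:ℂ) ^ ((c:ℂ) - b) ≠ 0 := by simp [Complex.cpow_eq_zero_iff, hN0]
  simp only [Pi.div_apply, Complex.GammaSeq]
  generalize (∏ j ∈ Finset.range (N + 1), ((c:ℂ) - a + j)) = A at *
  generalize (∏ j ∈ Finset.range (N + 1), ((c:ℂ) - b + j)) = B at *
  generalize (∏ j ∈ Finset.range (N + 1), ((c:ℂ) + j)) = C at *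
  generalize (∏ j ∈ Finset.range (N + 1), ((c:ℂ) - a - b + j)) = D at *
  generalize (N:ℂ) ^ ((c:ℂ) - a) = X at *
  generalize (N:ℂ) ^ ((c:ℂ) - b) = Y at *
  generalize (N:ℂ) ^ ((c:ℂ)) = Z at *
  generalize (N:ℂ) ^ ((c:ℂ) - a - b) = W at *
  rw [div_mul_div_comm, div_mul_div_comm, div_div_div_eq, div_eq_div_iff (mul_ne_zero pc pd)
    (mul_ne_zero (mul_ne_zero pc pd) (mul_ne_zero (mul_ne_zero q1 hf) (mul_ne_zero q2 hf)))]
  linear_combination (-(A * B * C * D * (N.factorial : ℂ) ^ 2)) * hpow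

lemma poch_ratio (a b : ℂ) (s p c : ℝ) (hab : a + b = s) (habp : a * b = p)
    (hc : 0 < c) (n : ℕ) :
    poch c n ≠ 0 ∧
      poch a n * poch b n / (poch c n * (Nat.factorial n : ℂ)) = (hA s p c n : ℂ) := by
  induction n with
  | zero => simp [poch, hA_zero]
  | succ n ih =>
    obtain ⟨h0, ih⟩ := ih
    have hcn : (c:ℂ) + n ≠ 0 := fun h => by
      have : c + (n:ℝ) = 0 := by exact_mod_cast h
      have hj : (0:ℝ) ≤ n := Nat.cast_nonneg n
      linarith
    have hs : ∀ x : ℂ, poch x (n + 1) = poch x n * (x + n) := fun x =>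
      ascPochhammer_succ_eval n x
    refine ⟨by rw [hs]; exact mul_ne_zero h0 hcn, ?_⟩
    rw [hA_succ, Complex.ofReal_mul, ← ih, hs, hs, hs, Nat.factorial_succ]
    push_cast
    rw [← hab, ← habp, div_mul_div_comm]
    congr 1 <;> ring

lemma uc_of_coeff (β : ℕ → ℂ) (g : ℂ → ℂ) (hg : g = fun z => ∑' n : ℕ, β n * z ^ (n + 1))
    (hS : Summable fun n : ℕ => (((n + 1) * (2 * (n + 1) - 1) : ℝ)) * ‖β n‖)
    (hS1 : (∑' n : ℕ, (((n + 1) * (2 * (n + 1) - 1) : ℝ)) * ‖β n‖) ≤ 1) :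
    UniformlyConvexOnDisk (fun z => z) g := by
  have hu1 : Summable fun n : ℕ => ((n:ℝ) + 1) * ‖β n‖ := by
    refine Summable.of_nonneg_of_le (fun n => by positivity) (fun n => ?_) hS
    gcongr
    nlinarith [Nat.cast_nonneg (α := ℝ) n]
  have hu2 : Summable fun n : ℕ => ((n:ℝ) + 1) * n * ‖β n‖ := by
    refine Summable.of_nonneg_of_le (fun n => by positivity) (fun n => ?_) hS
    gcongr
    nlinarith [Nat.cast_nonneg (α := ℝ) n]
  have hb1 : ∀ n : ℕ, ∀ y ∈ ball (0:ℂ) 1, ‖β n * ((n + 1 : ℂ) * y ^ n)‖ ≤ ((n:ℝ) + 1) * ‖β n‖ := by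
    intro n y hy
    have hy1 : ‖y‖ ≤ 1 := by simpa using (mem_ball_zero_iff.mp hy).le
    have hn : ‖(n:ℂ) + 1‖ = (n:ℝ) + 1 := by
      exact_mod_cast Complex.norm_natCast (n + 1)
    rw [norm_mul, norm_mul, norm_pow, hn]
    have : ‖y‖ ^ n ≤ 1 := pow_le_one₀ (norm_nonneg _) hy1
    have h2 : 0 ≤ ((n:ℝ) + 1) * ‖β n‖ := by positivity
    nlinarith
  have hb2 : ∀ n : ℕ, ∀ y ∈ ball (0:ℂ) 1,
      ‖β n * ((n + 1 : ℂ) * (n * y ^ (n - 1)))‖ ≤ ((n:ℝ) + 1) * n * ‖β n‖ := by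
    intro n y hy
    have hy1 : ‖y‖ ≤ 1 := by simpa using (mem_ball_zero_iff.mp hy).le
    have hn : ‖(n:ℂ) + 1‖ = (n:ℝ) + 1 := by
      exact_mod_cast Complex.norm_natCast (n + 1)
    rw [norm_mul, norm_mul, norm_mul, norm_pow, hn, Complex.norm_natCast]
    have : ‖y‖ ^ (n - 1) ≤ 1 := pow_le_one₀ (norm_nonneg _) hy1
    have h2 : 0 ≤ ((n:ℝ) + 1) * n * ‖β n‖ := by positivity
    nlinarith
  have hpc : IsPreconnected (ball (0:ℂ) 1) := (convex_ball 0 1).isPreconnected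
  have h0 : (0:ℂ) ∈ ball (0:ℂ) 1 := by simp
  have hd1 : ∀ y ∈ ball (0:ℂ) 1, HasDerivAt g (∑' n : ℕ, β n * ((n + 1 : ℂ) * y ^ n)) y := by
    intro y hy
    rw [hg]
    refine hasDerivAt_tsum_of_isPreconnected hu1 isOpen_ball hpc ?_ hb1 h0 ?_ hy
    · intro n y _
      simpa using (hasDerivAt_pow (n + 1) y).const_mul (β n)
    · simpa using summable_zero
  have hd2 : ∀ y ∈ ball (0:ℂ) 1, HasDerivAt (deriv g)
      (∑' n : ℕ, β n * ((n + 1 : ℂ) * (n * y ^ (n - 1)))) y := by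
    intro y hy
    have : HasDerivAt (fun y => ∑' n : ℕ, β n * ((n + 1 : ℂ) * y ^ n))
        (∑' n : ℕ, β n * ((n + 1 : ℂ) * (n * y ^ (n - 1)))) y := by
      refine hasDerivAt_tsum_of_isPreconnected hu2 isOpen_ball hpc ?_ hb2 h0 ?_ hy
      · intro n y _
        exact ((hasDerivAt_pow n y).const_mul _).const_mul (β n)
      · exact Summable.of_norm_bounded hu1 (fun n => hb1 n 0 h0)
    refine this.congr_of_eventuallyEq ?_
    filter_upwards [isOpen_ball.mem_nhds hy] with w hw
    exact (hd1 w hw).deriv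
  intro z hz ζ hζ hne
  have e1 : ‖deriv g z‖ ≤ ∑' n : ℕ, ((n:ℝ) + 1) * ‖β n‖ := by
    rw [(hd1 z hz).deriv]
    exact tsum_of_norm_bounded hu1.hasSum (fun n => hb1 n z hz)
  have e2 : ‖deriv (deriv g) z‖ ≤ ∑' n : ℕ, ((n:ℝ) + 1) * n * ‖β n‖ := by
    rw [(hd2 z hz).deriv]
    exact tsum_of_norm_bounded hu2.hasSum (fun n => hb2 n z hz)
  have e3 : (∑' n : ℕ, ((n:ℝ) + 1) * ‖β n‖) + 2 * (∑' n : ℕ, ((n:ℝ) + 1) * n * ‖β n‖) ≤ 1 := by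
    rw [← tsum_mul_left, ← hu1.tsum_add (hu2.mul_left 2)]
    refine le_trans (le_of_eq (tsum_congr fun n => ?_)) hS1
    ring
  have hw : ‖z - ζ‖ ≤ 2 := by
    have h1 := mem_ball_zero_iff.mp hz
    have h2 := mem_ball_zero_iff.mp hζ
    linarith [norm_sub_le z ζ]
  have hh : deriv (fun z : ℂ => z) = fun _ => 1 := by
    funext x
    exact deriv_id x
  rw [hh]
  simp only [deriv_const, mul_one, mul_zero, add_zero]
  generalize deriv (deriv g) z = v at *
  generalize deriv g z = u at *
  generalize z - ζ = w at *
  have huv : ‖u‖ + ‖w‖ * ‖v‖ ≤ 1 := by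
    nlinarith [norm_nonneg v, norm_nonneg w]
  set N := w + conj (w * u) + conj (w ^ 2 * v) with hN
  set D := w - conj (w * u) with hD
  have hle : ‖N - D‖ ≤ ‖N + D‖ := by
    have q1 : ‖N - D‖ ≤ ‖w‖ * (2 * ‖u‖ + ‖w‖ * ‖v‖) := by
      have : N - D = conj (2 * (w * u)) + conj (w ^ 2 * v) := by
        simp only [hN, hD, map_mul, map_pow, map_ofNat]; ring
      rw [this]
      refine (norm_add_le _ _).trans (le_of_eq ?_)
      rw [Complex.norm_conj, Complex.norm_conj]
      simp only [norm_mul, norm_pow, Complex.norm_ofNat]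
      ring
    have q2 : ‖w‖ * (2 - ‖w‖ * ‖v‖) ≤ ‖N + D‖ := by
      have : N + D = 2 * w - (- conj (w ^ 2 * v)) := by
        simp only [hN, hD]; ring
      rw [this]
      refine le_trans (le_of_eq ?_) (norm_sub_norm_le _ _)
      rw [norm_neg, Complex.norm_conj]
      simp only [norm_mul, norm_pow, Complex.norm_ofNat]
      ring
    refine q1.trans (le_trans ?_ q2)
    apply mul_le_mul_of_nonneg_left _ (norm_nonneg w)
    linarith
  have hsq : Complex.normSq (N - D) ≤ Complex.normSq (N + D) := by
    rw [Complex.normSq_eq_norm_sq, Complex.normSq_eq_norm_sq]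
    gcongr
  rw [Complex.normSq_apply, Complex.normSq_apply] at hsq
  simp only [Complex.add_re, Complex.add_im, Complex.sub_re, Complex.sub_im] at hsq
  rw [Complex.div_re, ← add_div]
  apply div_nonneg _ (Complex.normSq_nonneg _)
  nlinarith

/-- Theorem 6(c): under the stated conditions on `a, b, c, α`, the
coefficients of `g₃(z) = (α/2) ∫₀ᶻ F(a,b;c;t) dt` satisfy `∑_{n≥1} n(2n-1)|bₙ| ≤ 1`;
consequently `f₃(z) = z + conj(g₃(z))` is uniformly convex in `𝔻`. -/
theorem hypergeom_uniformly_convex_c (a b : ℂ)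
    (hab : (∃ a' b' : ℝ, a = (a' : ℂ) ∧ b = (b' : ℂ) ∧ -1 < a' ∧ -1 < b' ∧ 0 < a' * b') ∨
           (a ≠ 0 ∧ b ≠ 0 ∧ b = conj a))
    (c : ℝ) (hc : 0 < c) (hc1 : (a + b).re + 1 < c)
    (α : ℂ) (hα : ‖α‖ < 1)
    (hQ : ∃ q : ℝ, 0 < q ∧ q ≤ 2 ∧
      (q : ℂ) = (‖α‖ : ℂ) * (Complex.Gamma (c : ℂ) * Complex.Gamma ((c : ℂ) - a - b)
          / (Complex.Gamma ((c : ℂ) - a) * Complex.Gamma ((c : ℂ) - b)))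
        * ((2 * a * b + (c : ℂ) - a - b - 1) / ((c : ℂ) - a - b - 1))) :
    (Summable fun n : ℕ =>
      (((n + 1) * (2 * (n + 1) - 1) : ℝ)) * ‖bc3 a b (c : ℂ) α n‖) ∧
    (∑' n : ℕ, (((n + 1) * (2 * (n + 1) - 1) : ℝ)) * ‖bc3 a b (c : ℂ) α n‖) ≤ 1 ∧
    UniformlyConvexOnDisk (fun z => z)
      (fun z => α / 2 * hypFPrim a b (c : ℂ) z) := by
  obtain ⟨s, p, hs, hp', hp, hpos⟩ : ∃ s p : ℝ, a + b = s ∧ a * b = p ∧ 0 < p ∧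
      ∀ n : ℕ, 0 ≤ (n:ℝ) ^ 2 + s * n + p := by
    rcases hab with ⟨a', b', rfl, rfl, ha, hb, hp⟩ | ⟨ha, hb, rfl⟩
    · refine ⟨a' + b', a' * b', by push_cast; ring, by push_cast; ring, hp, fun n => ?_⟩
      rcases Nat.eq_zero_or_pos n with h | h
      · simp [h, hp.le]
      · have h1 : (1:ℝ) ≤ n := by exact_mod_cast h
        nlinarith [mul_pos (show 0 < (n:ℝ) + a' by linarith) (show 0 < (n:ℝ) + b' by linarith)]
    · refine ⟨2 * a.re, Complex.normSq a, ?_, Complex.mul_conj a, Complex.normSq_pos.mpr ha,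
        fun n => ?_⟩
      · rw [Complex.add_conj]
      · rw [Complex.normSq_apply]
        nlinarith [sq_nonneg ((n:ℝ) + a.re), sq_nonneg a.im]
  have hsc : s + 1 < c := by
    rw [hs, Complex.ofReal_re] at hc1
    exact hc1
  obtain ⟨q, hq0, hq2, hq⟩ := hQ
  have hga : Complex.Gamma ((c : ℂ) - a) ≠ 0 := by
    intro h
    rw [h] at hq
    simp at hq
    linarith
  have hgb : Complex.Gamma ((c : ℂ) - b) ≠ 0 := by
    intro h
    rw [h] at hq
    simp at hq
    linarith
  rw [← gauss_sum a b s p c hs hp' hc hsc hp hpos hga hgb] at hq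
  have hqr : q = ‖α‖ * (∑' n, hA s p c n) * ((2 * p + c - s - 1) / (c - s - 1)) := by
    have e : (2 * a * b + (c : ℂ) - a - b - 1) / ((c : ℂ) - a - b - 1)
        = (((2 * p + c - s - 1) / (c - s - 1) : ℝ) : ℂ) := by
      push_cast
      rw [← hs, ← hp']
      congr 1 <;> ring
    rw [e] at hq
    exact_mod_cast hq
  have hA0 := hA_nonneg s p c hc hpos
  have hterm : ∀ n : ℕ, (((n + 1) * (2 * (n + 1) - 1) : ℝ)) * ‖bc3 a b (c : ℂ) α n‖
      = ‖α‖ / 2 * (2 * ((n:ℝ) * hA s p c n) + hA s p c n) := by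
    intro n
    have hr := (poch_ratio a b s p c hs hp' hc n).2
    have e : bc3 a b (c : ℂ) α n = α / 2 * (hA s p c n : ℂ) / ((n : ℂ) + 1) := by
      rw [← hr, bc3, ← mul_div_assoc, div_div]
    have hn : ‖(n:ℂ) + 1‖ = (n:ℝ) + 1 := by
      exact_mod_cast Complex.norm_natCast (n + 1)
    rw [e, norm_div, norm_mul, norm_div, hn, Complex.norm_of_nonneg (hA0 n), Complex.norm_ofNat]
    field_simp
    ring
  have h1 := hA_summable_mul s p c hc hsc hp hpos
  have h2 := hA_summable s p c hc hsc hp hpos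
  have h3 := hA_tsum_mul s p c hc hsc hp hpos
  have hS : Summable fun n : ℕ =>
      (((n + 1) * (2 * (n + 1) - 1) : ℝ)) * ‖bc3 a b (c : ℂ) α n‖ := by
    simp only [hterm]
    exact ((h1.mul_left 2).add h2).mul_left _
  have hS1 : (∑' n : ℕ, (((n + 1) * (2 * (n + 1) - 1) : ℝ)) * ‖bc3 a b (c : ℂ) α n‖) ≤ 1 := by
    simp only [hterm]
    rw [tsum_mul_left, (h1.mul_left 2).tsum_add h2, tsum_mul_left]
    have hd : c - s - 1 ≠ 0 := by linarith
    have e : ∑' n : ℕ, (n:ℝ) * hA s p c n = p * (∑' n, hA s p c n) / (c - s - 1) := by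
      rw [eq_div_iff hd]
      linarith
    have e2 : ‖α‖ / 2 * (2 * (∑' n : ℕ, (n:ℝ) * hA s p c n) + ∑' n, hA s p c n) = q / 2 := by
      rw [e, hqr]
      field_simp
      ring
    rw [e2]
    linarith
  refine ⟨hS, hS1, uc_of_coeff (bc3 a b c α) _ ?_ hS hS1⟩
  funext z
  rw [hypFPrim, ← tsum_mul_left]
  refine tsum_congr fun n => ?_
  rw [bc3]
  ring
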